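/- Let V be a finite type, c : V → V → ℝ≥0 a capacity function, S ⊆ V a subset, P ≥ 1 an integer, and s, t distinct vertices of V with s ∉ S and t ∉ S. Then the minimum s-t cut value of the P-fold replication c_P of S equals the minimum s-t cut value of the P-reweighting c' of c with respect to S. -/

import Mathlib

/-!
STATEMENT 4: For distinct `s, t ∉ S`, the minimum s-t cut value of the P-fold
replication of `S` equals the minimum s-t cut value of the P-reweighting of `c`.
-/

open Finset

attribute [local instance] Classical.propDecidable

noncomputable section

/-- The value of the cut `A` for the capacity function `c`. -/
def cutValue {W : Type*} [Fintype W] (c : W → W → NNReal) (A : Finset W) : NNReal :=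
  ∑ u ∈ A, ∑ v ∈ Aᶜ, c u v

/-- The minimum `s`-`t` cut value (the least value of an `s`-`t` cut). -/
def minCutValue {W : Type*} [Fintype W] (c : W → W → NNReal) (s t : W) : NNReal :=
  sInf {x : NNReal | ∃ A : Finset W, s ∈ A ∧ t ∉ A ∧ cutValue c A = x}

/-- The capacity function of the `P`-fold replication of the subset `S`. -/
def repCap {V : Type*} (c : V → V → NNReal) (S : Set V) (P : ℕ) :
    ({v : V // v ∉ S} ⊕ (↥S × Fin P)) → ({v : V // v ∉ S} ⊕ (↥S × Fin P)) → NNReal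
  | Sum.inl u, Sum.inl v => c u.1 v.1
  | Sum.inl u, Sum.inr (v, _) => c u.1 v.1
  | Sum.inr (v, _), Sum.inl u => c v.1 u.1
  | Sum.inr (u, i), Sum.inr (v, j) => if i = j then c u.1 v.1 else 0

/-- The `P`-reweighting of `c` with respect to `S`. -/
def reweight {V : Type*} (c : V → V → NNReal) (S : Set V) (P : ℕ) : V → V → NNReal :=
  fun u v => if u ∈ S ∨ v ∈ S then (P : NNReal) * c u v else c u v

theorem cutValue_eq_ite {W : Type*} [Fintype W] (c : W → W → NNReal) (A : Finset W) :
    cutValue c A = ∑ u, ∑ v, if u ∈ A ∧ v ∉ A then c u v else 0 := by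
  unfold cutValue
  rw [← Finset.sum_filter_add_sum_filter_not Finset.univ (fun u => u ∈ A)
    (fun u => ∑ v, if u ∈ A ∧ v ∉ A then c u v else 0)]
  have h2 : ∑ u ∈ Finset.univ.filter (fun u => u ∉ A),
      ∑ v, (if u ∈ A ∧ v ∉ A then c u v else 0) = 0 := by
    apply Finset.sum_eq_zero
    intro u hu
    simp at hu
    simp [hu]
  rw [h2, add_zero]
  have h1 : Finset.univ.filter (fun u => u ∈ A) = A := by ext; simp
  rw [h1]
  apply Finset.sum_congr rfl
  intro u hu
  simp only [hu, true_and]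
  rw [← Finset.sum_filter]
  apply Finset.sum_congr _ (fun _ _ => rfl)
  ext; simp

/-- The `i`-th layer of a cut of the replication. -/
def layerCut {V : Type*} [Fintype V] (S : Set V) (P : ℕ)
    (A : Finset ({v : V // v ∉ S} ⊕ (↥S × Fin P))) (i : Fin P) : Finset V :=
  Finset.univ.filter (fun v => if h : v ∈ S then Sum.inr (⟨v, h⟩, i) ∈ A else Sum.inl ⟨v, h⟩ ∈ A)

theorem sum_split_aux {V : Type*} [Fintype V] (S : Set V) (f : V → NNReal) :
    ∑ v, f v = (∑ v : {v : V // v ∉ S}, f v) + ∑ v : ↥S, f v := by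
  rw [add_comm]
  exact (Fintype.sum_subtype_add_sum_subtype (fun v => v ∈ S) f).symm

theorem mul_cutValue_repCap {V : Type*} [Fintype V]
    (c : V → V → NNReal) (S : Set V) (P : ℕ)
    (A : Finset ({v : V // v ∉ S} ⊕ (↥S × Fin P))) :
    (P : NNReal) * cutValue (repCap c S P) A =
      ∑ i : Fin P, cutValue (reweight c S P) (layerCut S P A i) := by
  have hin : ∀ (u : {v : V // v ∉ S}) i, (u : V) ∈ layerCut S P A i ↔ Sum.inl u ∈ A := by
    intro u i
    simp [layerCut, u.2]
  have hir : ∀ (u : ↥S) i, (u : V) ∈ layerCut S P A i ↔ Sum.inr (u, i) ∈ A := by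
    intro u i
    simp [layerCut, u.2]
  have key : ∀ i, cutValue (reweight c S P) (layerCut S P A i) =
      (∑ u : {v : V // v ∉ S}, ∑ v : {v : V // v ∉ S},
        if Sum.inl u ∈ A ∧ Sum.inl v ∉ A then c u v else 0) +
      P * ((∑ u : {v : V // v ∉ S}, ∑ v : ↥S,
        if Sum.inl u ∈ A ∧ Sum.inr (v, i) ∉ A then c u v else 0) +
       (∑ u : ↥S, ∑ v : {v : V // v ∉ S},
        if Sum.inr (u, i) ∈ A ∧ Sum.inl v ∉ A then c u v else 0) +
       (∑ u : ↥S, ∑ v : ↥S,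
        if Sum.inr (u, i) ∈ A ∧ Sum.inr (v, i) ∉ A then c u v else 0)) := by
    intro i
    rw [cutValue_eq_ite, sum_split_aux S]
    simp only [sum_split_aux S (fun v => ite _ _ _), Finset.sum_add_distrib, hin, hir, reweight]
    have e1 : ∀ u : {v : V // v ∉ S}, ((u : V) ∈ S) = False := fun u => eq_false u.2
    have e2 : ∀ u : ↥S, ((u : V) ∈ S) = True := fun u => eq_true u.2
    simp only [e1, e2, or_true, true_or, or_false, if_true, if_false, mul_add, Finset.mul_sum,
      mul_ite, mul_zero]
    ring
  simp only [key, Finset.sum_add_distrib, ← Finset.mul_sum]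
  rw [Finset.sum_const, Finset.card_univ, Fintype.card_fin, nsmul_eq_mul, ← mul_add]
  congr 1
  rw [cutValue_eq_ite]
  simp only [Fintype.sum_sum_type, Fintype.sum_prod_type, Finset.sum_add_distrib, repCap]
  have h1 : ∀ (u : ↥S) (i : Fin P), (∑ v : ↥S, ∑ j : Fin P,
      if Sum.inr (u, i) ∈ A ∧ Sum.inr (v, j) ∉ A then (if i = j then c u v else 0) else 0)
      = ∑ v : ↥S, if Sum.inr (u, i) ∈ A ∧ Sum.inr (v, i) ∉ A then c u v else 0 := by
    intro u i
    apply Finset.sum_congr rfl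
    intro v _
    rw [Finset.sum_eq_single i]
    · simp
    · intro j _ hj
      simp [hj.symm]
    · simp
  simp only [h1]
  have h2 : (∑ u : {v : V // v ∉ S}, ∑ v : ↥S, ∑ i : Fin P,
      if Sum.inl u ∈ A ∧ Sum.inr (v, i) ∉ A then c u v else 0) =
      ∑ i : Fin P, ∑ u : {v : V // v ∉ S}, ∑ v : ↥S,
      if Sum.inl u ∈ A ∧ Sum.inr (v, i) ∉ A then c u v else 0 := by
    rw [Finset.sum_comm]
    rw [Finset.sum_comm]
    simp only [Finset.sum_comm (s := (Finset.univ : Finset ↥S)) (t := (Finset.univ : Finset (Fin P)))]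
    rw [Finset.sum_comm]
  rw [h2]
  rw [Finset.sum_comm (s := (Finset.univ : Finset ↥S)) (t := (Finset.univ : Finset (Fin P)))]
  rw [Finset.sum_comm (s := (Finset.univ : Finset ↥S)) (t := (Finset.univ : Finset (Fin P)))]
  ring

theorem minCut_repCap_eq_minCut_reweight {V : Type*} [Fintype V]
    (c : V → V → NNReal) (S : Set V) (P : ℕ) (hP : 1 ≤ P)
    (s t : V) (hst : s ≠ t) (hs : s ∉ S) (ht : t ∉ S) :
    minCutValue (repCap c S P) (Sum.inl ⟨s, hs⟩) (Sum.inl ⟨t, ht⟩) =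
      minCutValue (reweight c S P) s t := by
  have hP0 : (P : NNReal) ≠ 0 := by
    have : P ≠ 0 := by omega
    exact_mod_cast this
  unfold minCutValue
  apply le_antisymm
  · apply le_csInf
    · exact ⟨_, {s}, by simp, by simpa using hst.symm, rfl⟩
    · rintro x ⟨B, hsB, htB, rfl⟩
      apply csInf_le (OrderBot.bddBelow _)
      let A : Finset ({v : V // v ∉ S} ⊕ (↥S × Fin P)) :=
        Finset.univ.filter (fun w => Sum.elim (fun u : {v : V // v ∉ S} => (u : V)) (fun p : ↥S × Fin P => (p.1 : V)) w ∈ B)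
      refine ⟨A, by simp [A, hsB], by simp [A, htB], ?_⟩
      have h := mul_cutValue_repCap c S P A
      have hl : ∀ i, layerCut S P A i = B := by
        intro i
        ext v
        by_cases hv : v ∈ S <;> simp [layerCut, A, hv]
      simp only [hl, Finset.sum_const, Finset.card_univ, Fintype.card_fin, nsmul_eq_mul] at h
      exact mul_left_cancel₀ hP0 h
  · apply le_csInf
    · exact ⟨_, {Sum.inl ⟨s, hs⟩}, by simp, by simpa using hst.symm, rfl⟩
    · rintro x ⟨A, hsA, htA, rfl⟩
      have h := mul_cutValue_repCap c S P A
      have hne : (Finset.univ : Finset (Fin P)).Nonempty := ⟨⟨0, hP⟩, Finset.mem_univ _⟩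
      obtain ⟨i, -, hi⟩ : ∃ i ∈ (Finset.univ : Finset (Fin P)),
          cutValue (reweight c S P) (layerCut S P A i) ≤ cutValue (repCap c S P) A := by
        apply Finset.exists_le_of_sum_le hne
        rw [← h]
        simp
      refine le_trans (csInf_le (OrderBot.bddBelow _) ⟨layerCut S P A i, ?_, ?_, rfl⟩) hi
      · simpa [layerCut, hs] using hsA
      · simpa [layerCut, ht] using htA

end
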